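/- (Linear fractional change of the second arguments.) Let γ ∈ GL(3,ℂ) with rows (a₁,a₂,a₃),(b₁,b₂,b₃),(c₁,c₂,c₃), Δ := det(γ), and on the set c₁x+c₂y+c₃ ≠ 0 define w₁ := (a₁x+a₂y+a₃)/(c₁x+c₂y+c₃), w₂ := (b₁x+b₂y+b₃)/(c₁x+c₂y+c₃), and set A₁ := (a₁c₂−a₂c₁)y + (a₁c₃−a₃c₁), A₂ := (a₂c₁−a₁c₂)x + (a₂c₃−a₃c₂), B₁ := (b₁c₂−b₂c₁)y + (b₁c₃−b₃c₁), B₂ := (b₂c₁−b₁c₂)x + (b₂c₃−b₃c₂). Let u₁,u₂ be holomorphic functions of (w₁,w₂) with J(u₁,u₂) ≠ 0, and let ũᵢ(x,y) := uᵢ(w₁,w₂). Then the column vector ({ũ₁,ũ₂;x,y}ₓ, {ũ₁,ũ₂;x,y}ᵧ, [ũ₁,ũ₂;x,y]ₓ, [ũ₁,ũ₂;x,y]ᵧ)ᵀ equals (Δ·(c₁x+c₂y+c₃)³)⁻¹ times the 4×4 matrix with rows (A₁³, −B₁³, A₁²B₁, −A₁B₁²), (−A₂³, B₂³, −A₂²B₂,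 A₂B₂²), (3A₁²A₂, −3B₁²B₂, A₁²B₂+2A₁B₁A₂, −(B₁²A₂+2A₁B₁B₂)), (−3A₁A₂², 3B₁B₂², −(B₁A₂²+2A₁A₂B₂), A₁B₂²+2B₁A₂B₂) applied to the column vector ({u₁,u₂;w₁,w₂}_{w₁}, {u₁,u₂;w₁,w₂}_{w₂}, [u₁,u₂;w₁,w₂]_{w₁}, [u₁,u₂;w₁,w₂]_{w₂})ᵀ evaluated at (w₁,w₂). -/

import Mathlib

open Complex Matrix

noncomputable section

/-- Partial derivative in the first complex variable. -/
def pdx (f : ℂ × ℂ → ℂ) (p : ℂ × ℂ) : ℂ := deriv (fun x => f (x, p.2)) p.1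

/-- Partial derivative in the second complex variable. -/
def pdy (f : ℂ × ℂ → ℂ) (p : ℂ × ℂ) : ℂ := deriv (fun y => f (p.1, y)) p.2

/-- The Jacobian `J(u₁,u₂) = ∂ₓu₁·∂ᵧu₂ − ∂ₓu₂·∂ᵧu₁`. -/
def Jac (u₁ u₂ : ℂ × ℂ → ℂ) (p : ℂ × ℂ) : ℂ :=
  pdx u₁ p * pdy u₂ p - pdx u₂ p * pdy u₁ p

/-- The GL(3) derivative `{u₁,u₂;x,y}ₓ`. -/
def brX (u₁ u₂ : ℂ × ℂ → ℂ) (p : ℂ × ℂ) : ℂ :=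
  (pdx u₁ p * pdx (pdx u₂) p - pdx u₂ p * pdx (pdx u₁) p) / Jac u₁ u₂ p

/-- The GL(3) derivative `{u₁,u₂;x,y}ᵧ`. -/
def brY (u₁ u₂ : ℂ × ℂ → ℂ) (p : ℂ × ℂ) : ℂ :=
  -(pdy u₁ p * pdy (pdy u₂) p - pdy u₂ p * pdy (pdy u₁) p) / Jac u₁ u₂ p

/-- The GL(3) derivative `[u₁,u₂;x,y]ₓ`. -/
def sqX (u₁ u₂ : ℂ × ℂ → ℂ) (p : ℂ × ℂ) : ℂ :=
  ((pdy u₁ p * pdx (pdx u₂) p - pdy u₂ p * pdx (pdx u₁) p)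
      + 2 * (pdx u₁ p * pdx (pdy u₂) p - pdx u₂ p * pdx (pdy u₁) p)) / Jac u₁ u₂ p

/-- The GL(3) derivative `[u₁,u₂;x,y]ᵧ`. -/
def sqY (u₁ u₂ : ℂ × ℂ → ℂ) (p : ℂ × ℂ) : ℂ :=
  -((pdx u₁ p * pdy (pdy u₂) p - pdx u₂ p * pdy (pdy u₁) p)
      + 2 * (pdy u₁ p * pdx (pdy u₂) p - pdy u₂ p * pdx (pdy u₁) p)) / Jac u₁ u₂ p

/-- The 4×4 matrix `M(w₁,w₂;x,y)` built from the first partial derivatives of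
the holomorphic map `(w₁,w₂)`. -/
def Mmat (w₁ w₂ : ℂ × ℂ → ℂ) (p : ℂ × ℂ) : Matrix (Fin 4) (Fin 4) ℂ :=
  !![(pdx w₁ p) ^ 3, -(pdx w₂ p) ^ 3, (pdx w₁ p) ^ 2 * pdx w₂ p,
        -(pdx w₁ p) * (pdx w₂ p) ^ 2;
     -(pdy w₁ p) ^ 3, (pdy w₂ p) ^ 3, -(pdy w₁ p) ^ 2 * pdy w₂ p,
        (pdy w₁ p) * (pdy w₂ p) ^ 2;
     3 * (pdx w₁ p) ^ 2 * pdy w₁ p, -3 * (pdx w₂ p) ^ 2 * pdy w₂ p,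
        (pdx w₁ p) ^ 2 * pdy w₂ p + 2 * pdx w₁ p * pdx w₂ p * pdy w₁ p,
        -(pdx w₂ p) ^ 2 * pdy w₁ p - 2 * pdx w₁ p * pdx w₂ p * pdy w₂ p;
     -3 * pdx w₁ p * (pdy w₁ p) ^ 2, 3 * pdx w₂ p * (pdy w₂ p) ^ 2,
        -(pdx w₂ p) * (pdy w₁ p) ^ 2 - 2 * pdx w₁ p * pdy w₁ p * pdy w₂ p,
        (pdx w₁ p) * (pdy w₂ p) ^ 2 + 2 * pdx w₂ p * pdy w₁ p * pdy w₂ p]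

/-- The column vector of the four GL(3) derivatives of the pair `(u₁,u₂)`. -/
def Vvec (u₁ u₂ : ℂ × ℂ → ℂ) (p : ℂ × ℂ) : Fin 4 → ℂ :=
  ![brX u₁ u₂ p, brY u₁ u₂ p, sqX u₁ u₂ p, sqY u₁ u₂ p]

open MeasureTheory Metric Set Filter Topology in
/-- Directional derivatives of a holomorphic function of several variables are holomorphic. -/
theorem differentiableOn_fderiv_apply_const {E : Type*} [NormedAddCommGroup E]
    [NormedSpace ℂ E] [FiniteDimensional ℂ E] {f : E → ℂ} {s : Set E}
    (hf : DifferentiableOn ℂ f s) (hs : IsOpen s) (v : E) :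
    DifferentiableOn ℂ (fun p => fderiv ℂ f p v) s := by
  intro p₀ hp₀
  refine DifferentiableAt.differentiableWithinAt ?_
  have hfp : ContinuousAt f p₀ := (hf.differentiableAt (hs.mem_nhds hp₀)).continuousAt
  obtain ⟨R, hR, hball⟩ : ∃ R > 0, ball p₀ R ⊆ s ∩ f ⁻¹' ball (f p₀) 1 :=
    Metric.mem_nhds_iff.1 (inter_mem (hs.mem_nhds hp₀) (hfp (ball_mem_nhds _ one_pos)))
  have hdiff : ∀ q ∈ ball p₀ R, DifferentiableAt ℂ f q := fun q hq =>
    hf.differentiableAt (hs.mem_nhds (hball hq).1)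
  have hbound : ∀ q ∈ ball p₀ (R / 2), ‖fderiv ℂ f q‖ ≤ 2 / (R / 2) := by
    intro q hq
    have hsub : ball q (R / 2) ⊆ ball p₀ R := ball_subset_ball' (by
      rw [mem_ball] at hq; linarith)
    refine Complex.norm_fderiv_le_div_of_mapsTo_ball
      (fun z hz => (hdiff z (hsub hz)).differentiableWithinAt) (fun z hz => ?_) (by positivity)
    have h₁ : dist (f z) (f p₀) < 1 := (hball (hsub hz)).2
    have h₂ : dist (f q) (f p₀) < 1 := (hball (hsub (mem_ball_self (by positivity)))).2
    rw [mem_closedBall]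
    linarith [dist_triangle_right (f z) (f q) (f p₀)]
  obtain ⟨r, hr, hrv⟩ : ∃ r : ℝ, 0 < r ∧ r * ‖v‖ < R / 4 := by
    refine ⟨R / 4 / (‖v‖ + 1), by positivity, ?_⟩
    rw [div_mul_eq_mul_div, div_lt_iff₀ (by positivity)]
    nlinarith [norm_nonneg v]
  have hmem : ∀ q ∈ ball p₀ (R / 4), ∀ t ∈ closedBall (0 : ℂ) r, q + t • v ∈ ball p₀ (R / 2) := by
    intro q hq t ht
    rw [mem_ball, dist_eq_norm] at hq ⊢
    rw [mem_closedBall_zero_iff] at ht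
    calc ‖q + t • v - p₀‖ = ‖(q - p₀) + t • v‖ := by congr 1; abel
      _ ≤ ‖q - p₀‖ + ‖t‖ * ‖v‖ := (norm_add_le _ _).trans_eq (by rw [norm_smul])
      _ < R / 4 + R / 4 := add_lt_add_of_lt_of_le hq
        ((mul_le_mul_of_nonneg_right ht (norm_nonneg v)).trans hrv.le)
      _ = R / 2 := by ring
  have hhalf : ball p₀ (R / 2) ⊆ ball p₀ R := ball_subset_ball (by linarith)
  have hcauchy : ∀ q ∈ ball p₀ (R / 4), fderiv ℂ f q v =
      (2 * Real.pi * Complex.I)⁻¹ • ∫ θ in (0 : ℝ)..2 * Real.pi, deriv (circleMap 0 r) θ •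
        (1 / (circleMap 0 r θ - 0) ^ 2) • f (q + circleMap 0 r θ • v) := by
    intro q hq
    have hline : ∀ t ∈ closedBall (0 : ℂ) r,
        HasDerivAt (fun t : ℂ => f (q + t • v)) (fderiv ℂ f (q + t • v) v) t := fun t ht =>
      (hdiff _ (hhalf (hmem q hq t ht))).hasFDerivAt.comp_hasDerivAt t
        (by simpa using ((hasDerivAt_id t).smul_const v).const_add q)
    have hder := (hline 0 (mem_closedBall_self hr.le)).deriv
    have hint := DifferentiableOn.deriv_eq_smul_circleIntegral (c := 0) hr
      (fun t ht => (hline t ht).differentiableAt.differentiableWithinAt)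
    rw [hder] at hint
    simp only [zero_smul, add_zero] at hint
    rw [eq_inv_smul_iff₀ Complex.two_pi_I_ne_zero, ← hint]
    rfl
  have hcircle : ∀ θ : ℝ, circleMap 0 r θ ∈ closedBall (0 : ℂ) r := fun θ =>
    circleMap_mem_closedBall _ hr.le _
  have hcirc : Continuous (circleMap 0 r) := continuous_circleMap 0 r
  have hker : Continuous fun θ : ℝ =>
      deriv (circleMap 0 r) θ * (1 / (circleMap 0 r θ - 0) ^ 2) := by
    simp only [deriv_circleMap, sub_zero]
    exact (hcirc.mul continuous_const).mul (continuous_const.div (hcirc.pow 2) fun θ =>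
      pow_ne_zero _ (circleMap_ne_center hr.ne'))
  have hcont : ∀ q ∈ ball p₀ (R / 4), Continuous fun θ : ℝ =>
      deriv (circleMap 0 r) θ • (1 / (circleMap 0 r θ - 0) ^ 2) • f (q + circleMap 0 r θ • v) := by
    intro q hq
    simp only [smul_smul]
    refine hker.smul (continuous_iff_continuousAt.2 fun θ => ?_)
    exact ContinuousAt.comp (f := fun θ : ℝ => q + circleMap 0 r θ • v)
      (hdiff _ (hhalf (hmem q hq _ (hcircle θ)))).continuousAt (by fun_prop)
  have hnhds : ball p₀ (R / 4) ∈ 𝓝 p₀ := ball_mem_nhds _ (by positivity)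
  have hD : HasFDerivAt _ _ p₀ := intervalIntegral.hasFDerivAt_integral_of_dominated_of_fderiv_le
    (𝕜 := ℂ) (μ := volume) (a := 0) (b := 2 * Real.pi) (x₀ := p₀)
    (F := fun q θ => deriv (circleMap 0 r) θ • (1 / (circleMap 0 r θ - 0) ^ 2) •
      f (q + circleMap 0 r θ • v))
    (F' := fun q θ => (deriv (circleMap 0 r) θ * (1 / (circleMap 0 r θ - 0) ^ 2)) •
      fderiv ℂ f (q + circleMap 0 r θ • v))
    (bound := fun θ => ‖deriv (circleMap 0 r) θ * (1 / (circleMap 0 r θ - 0) ^ 2)‖ *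
      (2 / (R / 2))) hnhds
    (by
      filter_upwards [hnhds] with q hq
      exact (hcont q hq).aestronglyMeasurable)
    ((hcont p₀ (mem_of_mem_nhds hnhds)).intervalIntegrable _ _)
    (by
      borelize E
      have := FiniteDimensional.proper ℂ E
      have hm : Measurable fun θ : ℝ => fderiv ℂ f (p₀ + circleMap 0 r θ • v) :=
        (measurable_fderiv ℂ f).comp (Continuous.measurable (by fun_prop))
      exact hker.aestronglyMeasurable.smul hm.aestronglyMeasurable)
    (Eventually.of_forall fun θ _ q hq => by
      rw [norm_smul]
      exact mul_le_mul_of_nonneg_left (hbound _ (hmem q hq _ (hcircle θ))) (norm_nonneg _))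
    ((hker.norm.mul continuous_const).intervalIntegrable _ _)
    (Eventually.of_forall fun θ _ q hq => by
      simp only [smul_smul]
      have h : HasFDerivAt (fun q => f (q + circleMap 0 r θ • v))
          (fderiv ℂ f (q + circleMap 0 r θ • v)) q :=
        (hasFDerivAt_comp_add_right _).2 (hdiff _ (hhalf (hmem q hq _ (hcircle θ)))).hasFDerivAt
      exact h.const_smul (deriv (circleMap 0 r) θ * (1 / (circleMap 0 r θ - 0) ^ 2)))
  refine (hD.differentiableAt.const_smul (2 * Real.pi * Complex.I)⁻¹).congr_of_eventuallyEq ?_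
  filter_upwards [hnhds] with q hq using hcauchy q hq

theorem pdx_eq_fderiv {f : ℂ × ℂ → ℂ} {p : ℂ × ℂ} (hf : DifferentiableAt ℂ f p) :
    pdx f p = fderiv ℂ f p (1, 0) :=
  (hf.hasFDerivAt.comp_hasDerivAt p.1
    ((hasDerivAt_id p.1).prodMk (hasDerivAt_const p.1 p.2))).deriv

theorem pdy_eq_fderiv {f : ℂ × ℂ → ℂ} {p : ℂ × ℂ} (hf : DifferentiableAt ℂ f p) :
    pdy f p = fderiv ℂ f p (0, 1) :=
  (hf.hasFDerivAt.comp_hasDerivAt p.2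
    ((hasDerivAt_const p.2 p.1).prodMk (hasDerivAt_id p.2))).deriv

theorem fderiv_eq_pdx_pdy {f : ℂ × ℂ → ℂ} {p : ℂ × ℂ} (hf : DifferentiableAt ℂ f p) (v : ℂ × ℂ) :
    fderiv ℂ f p v = pdx f p * v.1 + pdy f p * v.2 := by
  have hv : v = v.1 • ((1 : ℂ), (0 : ℂ)) + v.2 • ((0 : ℂ), (1 : ℂ)) := by ext <;> simp
  conv_lhs => rw [hv]
  rw [map_add, map_smul, map_smul, pdx_eq_fderiv hf, pdy_eq_fderiv hf, smul_eq_mul, smul_eq_mul]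
  ring

theorem differentiableOn_pdx {f : ℂ × ℂ → ℂ} {s : Set (ℂ × ℂ)} (hf : DifferentiableOn ℂ f s)
    (hs : IsOpen s) : DifferentiableOn ℂ (pdx f) s :=
  (differentiableOn_fderiv_apply_const hf hs (1, 0)).congr fun _ hp =>
    pdx_eq_fderiv (hf.differentiableAt (hs.mem_nhds hp))

theorem differentiableOn_pdy {f : ℂ × ℂ → ℂ} {s : Set (ℂ × ℂ)} (hf : DifferentiableOn ℂ f s)
    (hs : IsOpen s) : DifferentiableOn ℂ (pdy f) s :=
  (differentiableOn_fderiv_apply_const hf hs (0, 1)).congr fun _ hp =>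
    pdy_eq_fderiv (hf.differentiableAt (hs.mem_nhds hp))

/-- Mixed partial derivatives of a holomorphic function commute. -/
theorem pdy_pdx_eq_pdx_pdy {f : ℂ × ℂ → ℂ} {s : Set (ℂ × ℂ)} (hf : DifferentiableOn ℂ f s)
    (hs : IsOpen s) {p : ℂ × ℂ} (hp : p ∈ s) : pdy (pdx f) p = pdx (pdy f) p := by
  have hx := (differentiableOn_pdx hf hs).differentiableAt (hs.mem_nhds hp)
  have hy := (differentiableOn_pdy hf hs).differentiableAt (hs.mem_nhds hp)
  have hD := (hx.hasFDerivAt.smul_const (ContinuousLinearMap.fst ℂ ℂ ℂ)).add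
    (hy.hasFDerivAt.smul_const (ContinuousLinearMap.snd ℂ ℂ ℂ))
  have hfD : ∀ᶠ q in nhds p, HasFDerivAt f (pdx f q • ContinuousLinearMap.fst ℂ ℂ ℂ +
      pdy f q • ContinuousLinearMap.snd ℂ ℂ ℂ) q := by
    filter_upwards [hs.mem_nhds hp] with q hq
    have h := hf.differentiableAt (hs.mem_nhds hq)
    convert h.hasFDerivAt using 1
    refine ContinuousLinearMap.ext fun v => ?_
    rw [fderiv_eq_pdx_pdy h]
    simp
  have hsymm := second_derivative_symmetric_of_eventually hfD hD (0, 1) (1, 0)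
  simpa [pdx_eq_fderiv hy, pdy_eq_fderiv hx] using hsymm

theorem pdx_comp {f g₁ g₂ : ℂ × ℂ → ℂ} {p : ℂ × ℂ} (hf : DifferentiableAt ℂ f (g₁ p, g₂ p))
    (h₁ : DifferentiableAt ℂ g₁ p) (h₂ : DifferentiableAt ℂ g₂ p) :
    pdx (fun q => f (g₁ q, g₂ q)) p =
      pdx f (g₁ p, g₂ p) * pdx g₁ p + pdy f (g₁ p, g₂ p) * pdx g₂ p := by
  have h := hf.hasFDerivAt.comp p (h₁.hasFDerivAt.prodMk h₂.hasFDerivAt)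
  rw [pdx_eq_fderiv (f := fun q => f (g₁ q, g₂ q)) h.differentiableAt, pdx_eq_fderiv h₁,
    pdx_eq_fderiv h₂]
  exact (congrArg (fun L => L (1, 0)) h.fderiv).trans (fderiv_eq_pdx_pdy hf _)

theorem pdy_comp {f g₁ g₂ : ℂ × ℂ → ℂ} {p : ℂ × ℂ} (hf : DifferentiableAt ℂ f (g₁ p, g₂ p))
    (h₁ : DifferentiableAt ℂ g₁ p) (h₂ : DifferentiableAt ℂ g₂ p) :
    pdy (fun q => f (g₁ q, g₂ q)) p =
      pdx f (g₁ p, g₂ p) * pdy g₁ p + pdy f (g₁ p, g₂ p) * pdy g₂ p := by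
  have h := hf.hasFDerivAt.comp p (h₁.hasFDerivAt.prodMk h₂.hasFDerivAt)
  rw [pdy_eq_fderiv (f := fun q => f (g₁ q, g₂ q)) h.differentiableAt, pdy_eq_fderiv h₁,
    pdy_eq_fderiv h₂]
  exact (congrArg (fun L => L (0, 1)) h.fderiv).trans (fderiv_eq_pdx_pdy hf _)

open Filter Topology in
theorem Filter.EventuallyEq.pdx_eq {f g : ℂ × ℂ → ℂ} {p : ℂ × ℂ} (h : f =ᶠ[𝓝 p] g) :
    pdx f p = pdx g p :=
  Filter.EventuallyEq.deriv_eq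
    (h.comp_tendsto (Continuous.tendsto (f := fun x => (x, p.2)) (by fun_prop) p.1))

open Filter Topology in
theorem Filter.EventuallyEq.pdy_eq {f g : ℂ × ℂ → ℂ} {p : ℂ × ℂ} (h : f =ᶠ[𝓝 p] g) :
    pdy f p = pdy g p :=
  Filter.EventuallyEq.deriv_eq
    (h.comp_tendsto (Continuous.tendsto (f := fun y => (p.1, y)) (by fun_prop) p.2))

theorem pdx_mul_add_mul {a b c d : ℂ × ℂ → ℂ} {p : ℂ × ℂ} (ha : DifferentiableAt ℂ a p)
    (hb : DifferentiableAt ℂ b p) (hc : DifferentiableAt ℂ c p) (hd : DifferentiableAt ℂ d p) :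
    pdx (fun q => a q * b q + c q * d q) p =
      pdx a p * b p + a p * pdx b p + (pdx c p * d p + c p * pdx d p) := by
  have hab := ha.hasFDerivAt.mul hb.hasFDerivAt
  have hcd := hc.hasFDerivAt.mul hd.hasFDerivAt
  rw [pdx_eq_fderiv (f := fun q => a q * b q + c q * d q) (hab.add hcd).differentiableAt,
    pdx_eq_fderiv ha, pdx_eq_fderiv hb, pdx_eq_fderiv hc, pdx_eq_fderiv hd]
  refine (congrArg (fun L => L (1, 0)) (hab.add hcd).fderiv).trans ?_
  simp
  ring

theorem pdy_mul_add_mul {a b c d : ℂ × ℂ → ℂ} {p : ℂ × ℂ} (ha : DifferentiableAt ℂ a p)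
    (hb : DifferentiableAt ℂ b p) (hc : DifferentiableAt ℂ c p) (hd : DifferentiableAt ℂ d p) :
    pdy (fun q => a q * b q + c q * d q) p =
      pdy a p * b p + a p * pdy b p + (pdy c p * d p + c p * pdy d p) := by
  have hab := ha.hasFDerivAt.mul hb.hasFDerivAt
  have hcd := hc.hasFDerivAt.mul hd.hasFDerivAt
  rw [pdy_eq_fderiv (f := fun q => a q * b q + c q * d q) (hab.add hcd).differentiableAt,
    pdy_eq_fderiv ha, pdy_eq_fderiv hb, pdy_eq_fderiv hc, pdy_eq_fderiv hd]
  refine (congrArg (fun L => L (0, 1)) (hab.add hcd).fderiv).trans ?_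
  simp
  ring

section SecondOrderChainRule

variable {f g₁ g₂ : ℂ × ℂ → ℂ} {s t : Set (ℂ × ℂ)} {p : ℂ × ℂ}

theorem pdx_pdx_comp (hf : DifferentiableOn ℂ f s) (hs : IsOpen s)
    (h₁ : DifferentiableOn ℂ g₁ t) (h₂ : DifferentiableOn ℂ g₂ t) (ht : IsOpen t)
    (hmaps : ∀ q ∈ t, (g₁ q, g₂ q) ∈ s) (hp : p ∈ t) :
    pdx (pdx fun q => f (g₁ q, g₂ q)) p =
      pdx (pdx f) (g₁ p, g₂ p) * pdx g₁ p ^ 2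
        + 2 * pdx (pdy f) (g₁ p, g₂ p) * pdx g₁ p * pdx g₂ p
        + pdy (pdy f) (g₁ p, g₂ p) * pdx g₂ p ^ 2
        + pdx f (g₁ p, g₂ p) * pdx (pdx g₁) p + pdy f (g₁ p, g₂ p) * pdx (pdx g₂) p := by
  have hfx := (differentiableOn_pdx hf hs).differentiableAt (hs.mem_nhds (hmaps p hp))
  have hfy := (differentiableOn_pdy hf hs).differentiableAt (hs.mem_nhds (hmaps p hp))
  have hd₁ := h₁.differentiableAt (ht.mem_nhds hp)
  have hd₂ := h₂.differentiableAt (ht.mem_nhds hp)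
  have hev : (pdx fun q => f (g₁ q, g₂ q)) =ᶠ[nhds p] fun q =>
      pdx f (g₁ q, g₂ q) * pdx g₁ q + pdy f (g₁ q, g₂ q) * pdx g₂ q := by
    filter_upwards [ht.mem_nhds hp] with q hq
    exact pdx_comp (hf.differentiableAt (hs.mem_nhds (hmaps q hq)))
      (h₁.differentiableAt (ht.mem_nhds hq)) (h₂.differentiableAt (ht.mem_nhds hq))
  rw [hev.pdx_eq, pdx_mul_add_mul (a := fun q => pdx f (g₁ q, g₂ q))
    (c := fun q => pdy f (g₁ q, g₂ q)) (hfx.fun_comp' p (hd₁.prodMk hd₂))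
    ((differentiableOn_pdx h₁ ht).differentiableAt (ht.mem_nhds hp))
    (hfy.fun_comp' p (hd₁.prodMk hd₂))
    ((differentiableOn_pdx h₂ ht).differentiableAt (ht.mem_nhds hp)),
    pdx_comp hfx hd₁ hd₂, pdx_comp hfy hd₁ hd₂, pdy_pdx_eq_pdx_pdy hf hs (hmaps p hp)]
  ring

theorem pdx_pdy_comp (hf : DifferentiableOn ℂ f s) (hs : IsOpen s)
    (h₁ : DifferentiableOn ℂ g₁ t) (h₂ : DifferentiableOn ℂ g₂ t) (ht : IsOpen t)
    (hmaps : ∀ q ∈ t, (g₁ q, g₂ q) ∈ s) (hp : p ∈ t) :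
    pdx (pdy fun q => f (g₁ q, g₂ q)) p =
      pdx (pdx f) (g₁ p, g₂ p) * pdx g₁ p * pdy g₁ p
        + pdx (pdy f) (g₁ p, g₂ p) * (pdx g₁ p * pdy g₂ p + pdx g₂ p * pdy g₁ p)
        + pdy (pdy f) (g₁ p, g₂ p) * pdx g₂ p * pdy g₂ p
        + pdx f (g₁ p, g₂ p) * pdx (pdy g₁) p + pdy f (g₁ p, g₂ p) * pdx (pdy g₂) p := by
  have hfx := (differentiableOn_pdx hf hs).differentiableAt (hs.mem_nhds (hmaps p hp))
  have hfy := (differentiableOn_pdy hf hs).differentiableAt (hs.mem_nhds (hmaps p hp))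
  have hd₁ := h₁.differentiableAt (ht.mem_nhds hp)
  have hd₂ := h₂.differentiableAt (ht.mem_nhds hp)
  have hev : (pdy fun q => f (g₁ q, g₂ q)) =ᶠ[nhds p] fun q =>
      pdx f (g₁ q, g₂ q) * pdy g₁ q + pdy f (g₁ q, g₂ q) * pdy g₂ q := by
    filter_upwards [ht.mem_nhds hp] with q hq
    exact pdy_comp (hf.differentiableAt (hs.mem_nhds (hmaps q hq)))
      (h₁.differentiableAt (ht.mem_nhds hq)) (h₂.differentiableAt (ht.mem_nhds hq))
  rw [hev.pdx_eq, pdx_mul_add_mul (a := fun q => pdx f (g₁ q, g₂ q))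
    (c := fun q => pdy f (g₁ q, g₂ q)) (hfx.fun_comp' p (hd₁.prodMk hd₂))
    ((differentiableOn_pdy h₁ ht).differentiableAt (ht.mem_nhds hp))
    (hfy.fun_comp' p (hd₁.prodMk hd₂))
    ((differentiableOn_pdy h₂ ht).differentiableAt (ht.mem_nhds hp)),
    pdx_comp hfx hd₁ hd₂, pdx_comp hfy hd₁ hd₂, pdy_pdx_eq_pdx_pdy hf hs (hmaps p hp)]
  ring

theorem pdy_pdy_comp (hf : DifferentiableOn ℂ f s) (hs : IsOpen s)
    (h₁ : DifferentiableOn ℂ g₁ t) (h₂ : DifferentiableOn ℂ g₂ t) (ht : IsOpen t)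
    (hmaps : ∀ q ∈ t, (g₁ q, g₂ q) ∈ s) (hp : p ∈ t) :
    pdy (pdy fun q => f (g₁ q, g₂ q)) p =
      pdx (pdx f) (g₁ p, g₂ p) * pdy g₁ p ^ 2
        + 2 * pdx (pdy f) (g₁ p, g₂ p) * pdy g₁ p * pdy g₂ p
        + pdy (pdy f) (g₁ p, g₂ p) * pdy g₂ p ^ 2
        + pdx f (g₁ p, g₂ p) * pdy (pdy g₁) p + pdy f (g₁ p, g₂ p) * pdy (pdy g₂) p := by
  have hfx := (differentiableOn_pdx hf hs).differentiableAt (hs.mem_nhds (hmaps p hp))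
  have hfy := (differentiableOn_pdy hf hs).differentiableAt (hs.mem_nhds (hmaps p hp))
  have hd₁ := h₁.differentiableAt (ht.mem_nhds hp)
  have hd₂ := h₂.differentiableAt (ht.mem_nhds hp)
  have hev : (pdy fun q => f (g₁ q, g₂ q)) =ᶠ[nhds p] fun q =>
      pdx f (g₁ q, g₂ q) * pdy g₁ q + pdy f (g₁ q, g₂ q) * pdy g₂ q := by
    filter_upwards [ht.mem_nhds hp] with q hq
    exact pdy_comp (hf.differentiableAt (hs.mem_nhds (hmaps q hq)))
      (h₁.differentiableAt (ht.mem_nhds hq)) (h₂.differentiableAt (ht.mem_nhds hq))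
  rw [hev.pdy_eq, pdy_mul_add_mul (a := fun q => pdx f (g₁ q, g₂ q))
    (c := fun q => pdy f (g₁ q, g₂ q)) (hfx.fun_comp' p (hd₁.prodMk hd₂))
    ((differentiableOn_pdy h₁ ht).differentiableAt (ht.mem_nhds hp))
    (hfy.fun_comp' p (hd₁.prodMk hd₂))
    ((differentiableOn_pdy h₂ ht).differentiableAt (ht.mem_nhds hp)),
    pdy_comp hfx hd₁ hd₂, pdy_comp hfy hd₁ hd₂, pdy_pdx_eq_pdx_pdy hf hs (hmaps p hp)]
  ring

end SecondOrderChainRule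

section LinearFractional

variable (a₁ a₂ a₃ c₁ c₂ c₃ : ℂ)

theorem pdx_linearFractional {p : ℂ × ℂ} (hp : c₁ * p.1 + c₂ * p.2 + c₃ ≠ 0) :
    pdx (fun p => (a₁ * p.1 + a₂ * p.2 + a₃) / (c₁ * p.1 + c₂ * p.2 + c₃)) p =
      ((a₁ * c₂ - a₂ * c₁) * p.2 + (a₁ * c₃ - a₃ * c₁)) / (c₁ * p.1 + c₂ * p.2 + c₃) ^ 2 := by
  have hlin : ∀ e₁ e₂ e₃ : ℂ, HasDerivAt (fun x => e₁ * x + e₂ * p.2 + e₃) e₁ p.1 :=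
    fun e₁ e₂ e₃ => by
      simpa using (((hasDerivAt_id p.1).const_mul e₁).add_const (e₂ * p.2)).add_const e₃
  refine ((hlin a₁ a₂ a₃).div (hlin c₁ c₂ c₃) hp).deriv.trans ?_
  congr 1
  ring

theorem pdy_linearFractional {p : ℂ × ℂ} (hp : c₁ * p.1 + c₂ * p.2 + c₃ ≠ 0) :
    pdy (fun p => (a₁ * p.1 + a₂ * p.2 + a₃) / (c₁ * p.1 + c₂ * p.2 + c₃)) p =
      ((a₂ * c₁ - a₁ * c₂) * p.1 + (a₂ * c₃ - a₃ * c₂)) / (c₁ * p.1 + c₂ * p.2 + c₃) ^ 2 := by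
  have hlin : ∀ e₁ e₂ e₃ : ℂ, HasDerivAt (fun y => e₁ * p.1 + e₂ * y + e₃) e₂ p.2 :=
    fun e₁ e₂ e₃ => by
      simpa using (((hasDerivAt_id p.2).const_mul e₂).const_add (e₁ * p.1)).add_const e₃
  refine ((hlin a₁ a₂ a₃).div (hlin c₁ c₂ c₃) hp).deriv.trans ?_
  congr 1
  ring

theorem isOpen_linearFractional_domain :
    IsOpen {p : ℂ × ℂ | c₁ * p.1 + c₂ * p.2 + c₃ ≠ 0} :=
  isOpen_ne_fun (by fun_prop) continuous_const

theorem pdx_pdx_linearFractional {p : ℂ × ℂ} (hp : c₁ * p.1 + c₂ * p.2 + c₃ ≠ 0) :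
    pdx (pdx fun p => (a₁ * p.1 + a₂ * p.2 + a₃) / (c₁ * p.1 + c₂ * p.2 + c₃)) p =
      -2 * c₁ * ((a₁ * c₂ - a₂ * c₁) * p.2 + (a₁ * c₃ - a₃ * c₁)) /
        (c₁ * p.1 + c₂ * p.2 + c₃) ^ 3 := by
  have hev := Filter.mem_of_superset
    ((isOpen_linearFractional_domain c₁ c₂ c₃).mem_nhds hp)
    fun q hq => pdx_linearFractional a₁ a₂ a₃ c₁ c₂ c₃ hq
  rw [Filter.EventuallyEq.pdx_eq hev]
  have hden : HasDerivAt (fun x => c₁ * x + c₂ * p.2 + c₃) c₁ p.1 := by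
    simpa using (((hasDerivAt_id p.1).const_mul c₁).add_const (c₂ * p.2)).add_const c₃
  refine (HasDerivAt.div
    (hasDerivAt_const p.1 ((a₁ * c₂ - a₂ * c₁) * p.2 + (a₁ * c₃ - a₃ * c₁)))
    (hden.pow 2) (pow_ne_zero 2 hp)).deriv.trans ?_
  rw [div_eq_div_iff (by simpa using hp) (by simpa using hp)]
  simp
  ring

theorem pdx_pdy_linearFractional {p : ℂ × ℂ} (hp : c₁ * p.1 + c₂ * p.2 + c₃ ≠ 0) :
    pdx (pdy fun p => (a₁ * p.1 + a₂ * p.2 + a₃) / (c₁ * p.1 + c₂ * p.2 + c₃)) p =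
      -(c₂ * ((a₁ * c₂ - a₂ * c₁) * p.2 + (a₁ * c₃ - a₃ * c₁)) +
        c₁ * ((a₂ * c₁ - a₁ * c₂) * p.1 + (a₂ * c₃ - a₃ * c₂))) /
        (c₁ * p.1 + c₂ * p.2 + c₃) ^ 3 := by
  have hev := Filter.mem_of_superset
    ((isOpen_linearFractional_domain c₁ c₂ c₃).mem_nhds hp)
    fun q hq => pdy_linearFractional a₁ a₂ a₃ c₁ c₂ c₃ hq
  rw [Filter.EventuallyEq.pdx_eq hev]
  have hden : HasDerivAt (fun x => c₁ * x + c₂ * p.2 + c₃) c₁ p.1 := by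
    simpa using (((hasDerivAt_id p.1).const_mul c₁).add_const (c₂ * p.2)).add_const c₃
  have hnum : HasDerivAt (fun x => (a₂ * c₁ - a₁ * c₂) * x + (a₂ * c₃ - a₃ * c₂))
      (a₂ * c₁ - a₁ * c₂) p.1 := by
    simpa using ((hasDerivAt_id p.1).const_mul (a₂ * c₁ - a₁ * c₂)).add_const (a₂ * c₃ - a₃ * c₂)
  refine (hnum.div
    (hden.pow 2) (pow_ne_zero 2 hp)).deriv.trans ?_
  rw [div_eq_div_iff (by simpa using hp) (by simpa using hp)]
  simp
  ring

theorem pdy_pdy_linearFractional {p : ℂ × ℂ} (hp : c₁ * p.1 + c₂ * p.2 + c₃ ≠ 0) :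
    pdy (pdy fun p => (a₁ * p.1 + a₂ * p.2 + a₃) / (c₁ * p.1 + c₂ * p.2 + c₃)) p =
      -2 * c₂ * ((a₂ * c₁ - a₁ * c₂) * p.1 + (a₂ * c₃ - a₃ * c₂)) /
        (c₁ * p.1 + c₂ * p.2 + c₃) ^ 3 := by
  have hev := Filter.mem_of_superset
    ((isOpen_linearFractional_domain c₁ c₂ c₃).mem_nhds hp)
    fun q hq => pdy_linearFractional a₁ a₂ a₃ c₁ c₂ c₃ hq
  rw [Filter.EventuallyEq.pdy_eq hev]
  have hden : HasDerivAt (fun y => c₁ * p.1 + c₂ * y + c₃) c₂ p.2 := by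
    simpa using (((hasDerivAt_id p.2).const_mul c₂).const_add (c₁ * p.1)).add_const c₃
  refine (HasDerivAt.div
    (hasDerivAt_const p.2 ((a₂ * c₁ - a₁ * c₂) * p.1 + (a₂ * c₃ - a₃ * c₂)))
    (hden.pow 2) (pow_ne_zero 2 hp)).deriv.trans ?_
  rw [div_eq_div_iff (by simpa using hp) (by simpa using hp)]
  simp
  ring

theorem differentiableOn_linearFractional :
    DifferentiableOn ℂ
      (fun p : ℂ × ℂ => (a₁ * p.1 + a₂ * p.2 + a₃) / (c₁ * p.1 + c₂ * p.2 + c₃))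
      {p | c₁ * p.1 + c₂ * p.2 + c₃ ≠ 0} :=
  DifferentiableOn.fun_mul (by fun_prop)
    (DifferentiableOn.fun_inv (by fun_prop) fun _ hp => hp)

end LinearFractional

/-- Transformation of the four GL(3) derivatives under a linear
fractional change of the second (independent) arguments. -/
theorem statement4 (a₁ a₂ a₃ b₁ b₂ b₃ c₁ c₂ c₃ : ℂ)
    (hdet : a₁ * (b₂ * c₃ - b₃ * c₂) - a₂ * (b₁ * c₃ - b₃ * c₁)
        + a₃ * (b₁ * c₂ - b₂ * c₁) ≠ 0)
    (w₁ w₂ : ℂ × ℂ → ℂ)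
    (hw₁ : w₁ = fun p => (a₁ * p.1 + a₂ * p.2 + a₃) / (c₁ * p.1 + c₂ * p.2 + c₃))
    (hw₂ : w₂ = fun p => (b₁ * p.1 + b₂ * p.2 + b₃) / (c₁ * p.1 + c₂ * p.2 + c₃))
    (A₁ A₂ B₁ B₂ : ℂ × ℂ → ℂ)
    (hA₁ : A₁ = fun p => (a₁ * c₂ - a₂ * c₁) * p.2 + (a₁ * c₃ - a₃ * c₁))
    (hA₂ : A₂ = fun p => (a₂ * c₁ - a₁ * c₂) * p.1 + (a₂ * c₃ - a₃ * c₂))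
    (hB₁ : B₁ = fun p => (b₁ * c₂ - b₂ * c₁) * p.2 + (b₁ * c₃ - b₃ * c₁))
    (hB₂ : B₂ = fun p => (b₂ * c₁ - b₁ * c₂) * p.1 + (b₂ * c₃ - b₃ * c₂))
    (Ω' : Set (ℂ × ℂ)) (hΩ' : IsOpen Ω')
    (u₁ u₂ : ℂ × ℂ → ℂ)
    (hu₁ : DifferentiableOn ℂ u₁ Ω') (hu₂ : DifferentiableOn ℂ u₂ Ω')
    (hJu : ∀ q ∈ Ω', Jac u₁ u₂ q ≠ 0) :
    ∀ p : ℂ × ℂ, c₁ * p.1 + c₂ * p.2 + c₃ ≠ 0 → (w₁ p, w₂ p) ∈ Ω' →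
      Vvec (fun q => u₁ (w₁ q, w₂ q)) (fun q => u₂ (w₁ q, w₂ q)) p =
        ((a₁ * (b₂ * c₃ - b₃ * c₂) - a₂ * (b₁ * c₃ - b₃ * c₁)
            + a₃ * (b₁ * c₂ - b₂ * c₁)) * (c₁ * p.1 + c₂ * p.2 + c₃) ^ 3)⁻¹ •
          (!![(A₁ p) ^ 3, -(B₁ p) ^ 3, (A₁ p) ^ 2 * B₁ p, -(A₁ p) * (B₁ p) ^ 2;
              -(A₂ p) ^ 3, (B₂ p) ^ 3, -(A₂ p) ^ 2 * B₂ p, A₂ p * (B₂ p) ^ 2;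
              3 * (A₁ p) ^ 2 * A₂ p, -3 * (B₁ p) ^ 2 * B₂ p,
                (A₁ p) ^ 2 * B₂ p + 2 * A₁ p * B₁ p * A₂ p,
                -((B₁ p) ^ 2 * A₂ p + 2 * A₁ p * B₁ p * B₂ p);
              -3 * A₁ p * (A₂ p) ^ 2, 3 * B₁ p * (B₂ p) ^ 2,
                -((B₁ p) * (A₂ p) ^ 2 + 2 * A₁ p * A₂ p * B₂ p),
                A₁ p * (B₂ p) ^ 2 + 2 * B₁ p * A₂ p * B₂ p]
            *ᵥ Vvec u₁ u₂ (w₁ p, w₂ p)) := by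
  intro p hp hpΩ
  have hwo₁ : DifferentiableOn ℂ w₁ {q | c₁ * q.1 + c₂ * q.2 + c₃ ≠ 0} :=
    hw₁ ▸ differentiableOn_linearFractional a₁ a₂ a₃ c₁ c₂ c₃
  have hwo₂ : DifferentiableOn ℂ w₂ {q | c₁ * q.1 + c₂ * q.2 + c₃ ≠ 0} :=
    hw₂ ▸ differentiableOn_linearFractional b₁ b₂ b₃ c₁ c₂ c₃
  obtain ⟨t, ht, hpt, hwt₁, hwt₂, hmaps⟩ : ∃ t : Set (ℂ × ℂ), IsOpen t ∧ p ∈ t ∧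
      DifferentiableOn ℂ w₁ t ∧ DifferentiableOn ℂ w₂ t ∧ ∀ q ∈ t, (w₁ q, w₂ q) ∈ Ω' :=
    ⟨_, (hwo₁.continuousOn.prodMk hwo₂.continuousOn).isOpen_inter_preimage
      (isOpen_linearFractional_domain c₁ c₂ c₃) hΩ', ⟨hp, hpΩ⟩, hwo₁.mono Set.inter_subset_left,
      hwo₂.mono Set.inter_subset_left, fun q hq => hq.2⟩
  have hwd₁ := hwt₁.differentiableAt (ht.mem_nhds hpt)
  have hwd₂ := hwt₂.differentiableAt (ht.mem_nhds hpt)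
  have hud₁ := hu₁.differentiableAt (hΩ'.mem_nhds hpΩ)
  have hud₂ := hu₂.differentiableAt (hΩ'.mem_nhds hpΩ)
  have hw₁x : pdx w₁ p = A₁ p / (c₁ * p.1 + c₂ * p.2 + c₃) ^ 2 := by
    rw [hw₁, hA₁]; exact pdx_linearFractional _ _ _ _ _ _ hp
  have hw₁y : pdy w₁ p = A₂ p / (c₁ * p.1 + c₂ * p.2 + c₃) ^ 2 := by
    rw [hw₁, hA₂]; exact pdy_linearFractional _ _ _ _ _ _ hp
  have hw₂x : pdx w₂ p = B₁ p / (c₁ * p.1 + c₂ * p.2 + c₃) ^ 2 := by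
    rw [hw₂, hB₁]; exact pdx_linearFractional _ _ _ _ _ _ hp
  have hw₂y : pdy w₂ p = B₂ p / (c₁ * p.1 + c₂ * p.2 + c₃) ^ 2 := by
    rw [hw₂, hB₂]; exact pdy_linearFractional _ _ _ _ _ _ hp
  have hw₁xx : pdx (pdx w₁) p = -2 * c₁ * A₁ p / (c₁ * p.1 + c₂ * p.2 + c₃) ^ 3 := by
    rw [hw₁, hA₁]; exact pdx_pdx_linearFractional _ _ _ _ _ _ hp
  have hw₁xy : pdx (pdy w₁) p =
      -(c₂ * A₁ p + c₁ * A₂ p) / (c₁ * p.1 + c₂ * p.2 + c₃) ^ 3 := by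
    rw [hw₁, hA₁, hA₂]; exact pdx_pdy_linearFractional _ _ _ _ _ _ hp
  have hw₁yy : pdy (pdy w₁) p = -2 * c₂ * A₂ p / (c₁ * p.1 + c₂ * p.2 + c₃) ^ 3 := by
    rw [hw₁, hA₂]; exact pdy_pdy_linearFractional _ _ _ _ _ _ hp
  have hw₂xx : pdx (pdx w₂) p = -2 * c₁ * B₁ p / (c₁ * p.1 + c₂ * p.2 + c₃) ^ 3 := by
    rw [hw₂, hB₁]; exact pdx_pdx_linearFractional _ _ _ _ _ _ hp
  have hw₂xy : pdx (pdy w₂) p =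
      -(c₂ * B₁ p + c₁ * B₂ p) / (c₁ * p.1 + c₂ * p.2 + c₃) ^ 3 := by
    rw [hw₂, hB₁, hB₂]; exact pdx_pdy_linearFractional _ _ _ _ _ _ hp
  have hw₂yy : pdy (pdy w₂) p = -2 * c₂ * B₂ p / (c₁ * p.1 + c₂ * p.2 + c₃) ^ 3 := by
    rw [hw₂, hB₂]; exact pdy_pdy_linearFractional _ _ _ _ _ _ hp
  have hAB : A₁ p * B₂ p - A₂ p * B₁ p =
      (a₁ * (b₂ * c₃ - b₃ * c₂) - a₂ * (b₁ * c₃ - b₃ * c₁) + a₃ * (b₁ * c₂ - b₂ * c₁)) *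
        (c₁ * p.1 + c₂ * p.2 + c₃) := by
    simp only [hA₁, hA₂, hB₁, hB₂]
    ring
  have hJw := hJu _ hpΩ
  have hJ : Jac (fun q => u₁ (w₁ q, w₂ q)) (fun q => u₂ (w₁ q, w₂ q)) p =
      Jac u₁ u₂ (w₁ p, w₂ p) *
        (a₁ * (b₂ * c₃ - b₃ * c₂) - a₂ * (b₁ * c₃ - b₃ * c₁) + a₃ * (b₁ * c₂ - b₂ * c₁)) /
        (c₁ * p.1 + c₂ * p.2 + c₃) ^ 3 := by
    rw [Jac, Jac, pdx_comp hud₁ hwd₁ hwd₂, pdx_comp hud₂ hwd₁ hwd₂, pdy_comp hud₁ hwd₁ hwd₂,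
      pdy_comp hud₂ hwd₁ hwd₂, hw₁x, hw₁y, hw₂x, hw₂y, eq_div_iff (pow_ne_zero 3 hp)]
    generalize a₁ * (b₂ * c₃ - b₃ * c₂) - a₂ * (b₁ * c₃ - b₃ * c₁)
      + a₃ * (b₁ * c₂ - b₂ * c₁) = Δ at *
    generalize c₁ * p.1 + c₂ * p.2 + c₃ = l at *
    field_simp
    linear_combination (pdx u₁ (w₁ p, w₂ p) * pdy u₂ (w₁ p, w₂ p)
      - pdx u₂ (w₁ p, w₂ p) * pdy u₁ (w₁ p, w₂ p)) * hAB
  ext i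
  fin_cases i <;>
  · simp only [Vvec, brX, brY, sqX, sqY, hJ,
      pdx_pdx_comp hu₁ hΩ' hwt₁ hwt₂ ht hmaps hpt, pdx_pdx_comp hu₂ hΩ' hwt₁ hwt₂ ht hmaps hpt,
      pdx_pdy_comp hu₁ hΩ' hwt₁ hwt₂ ht hmaps hpt, pdx_pdy_comp hu₂ hΩ' hwt₁ hwt₂ ht hmaps hpt,
      pdy_pdy_comp hu₁ hΩ' hwt₁ hwt₂ ht hmaps hpt, pdy_pdy_comp hu₂ hΩ' hwt₁ hwt₂ ht hmaps hpt,
      pdx_comp hud₁ hwd₁ hwd₂, pdx_comp hud₂ hwd₁ hwd₂, pdy_comp hud₁ hwd₁ hwd₂,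
      pdy_comp hud₂ hwd₁ hwd₂, hw₁x, hw₁y, hw₂x, hw₂y, hw₁xx, hw₁xy, hw₁yy, hw₂xx, hw₂xy, hw₂yy]
    clear hJ hAB hw₁x hw₁y hw₂x hw₂y hw₁xx hw₁xy hw₁yy hw₂xx hw₂xy hw₂yy
    generalize a₁ * (b₂ * c₃ - b₃ * c₂) - a₂ * (b₁ * c₃ - b₃ * c₁)
      + a₃ * (b₁ * c₂ - b₂ * c₁) = Δ at *
    generalize c₁ * p.1 + c₂ * p.2 + c₃ = l at *
    simp
    field_simp
    ring
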